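/- Let φ : B → A be a homomorphism of Artin algebras preserving identities such that 2 ≤ fd(φ) < ∞, where fd(φ) is the relative finitistic dimension of φ. Suppose that A has finite projective dimension as a left B-module (via φ) and that A is projective as a right B-module. If B is representation-finite, then the finitistic dimension of A is finite. -/

import Mathlib

/-!
Let `X` be a finitely generated `A`-module of finite projective dimension. Since `A` has finite
projective dimension over `B`, so has the restriction of `X`, hence its projective dimension over
`B` is at most the finitistic dimension `f` of `B`, which is finite because an indecomposable
summand attains one of finitely many values. The functor `A ⊗_B -` is exact and preserves
projectives, so `A ⊗_B X` has projective dimension at most `f` over `A`.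

The kernel of `A ⊗_B X → X` is again finitely generated of finite projective dimension over `A`.
By a relative form of Schanuel's lemma, iterating this construction produces an `(A, B)`-projective
module after at most `n = fd φ` steps, and this last module, a summand of its own induced module,
has projective dimension at most `f`. Shifting dimension along the `n` short exact sequences gives
`f + n` as a bound for the projective dimension of `X`.
-/

universe u

open TensorProduct

section Basic

variable (Λ : Type u) [Ring Λ]

/-- `ProjDimLE Λ n M` : the module `M` admits a projective resolution of length `≤ n`
by finitely generated projective `Λ`-modules. -/
def ProjDimLE : ℕ → ModuleCat.{u} Λ → Prop
  | 0, M => Module.Projective Λ M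
  | n + 1, M => ∃ (P : ModuleCat.{u} Λ) (g : P →ₗ[Λ] M),
      Module.Projective Λ P ∧ Module.Finite Λ P ∧ Function.Surjective g ∧
      ProjDimLE n (ModuleCat.of Λ (LinearMap.ker g))

/-- The finitistic dimension of `Λ` (computed on finitely generated modules) is finite. -/
def FinFinDim : Prop :=
  ∃ n : ℕ, ∀ M : ModuleCat.{u} Λ, Module.Finite Λ M →
    (∃ k : ℕ, ProjDimLE Λ k M) → ProjDimLE Λ n M

/-- A module is indecomposable. -/
def ModIndec (M : ModuleCat.{u} Λ) : Prop :=
  Nontrivial M ∧ ∀ N₁ N₂ : Submodule Λ M, IsCompl N₁ N₂ → N₁ = ⊥ ∨ N₂ = ⊥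

/-- A class of modules has only finitely many isomorphism classes of indecomposables. -/
def ClassRepFinite (C : ModuleCat.{u} Λ → Prop) : Prop :=
  ∃ (k : ℕ) (N : Fin k → ModuleCat.{u} Λ),
    ∀ M : ModuleCat.{u} Λ, C M → ModIndec Λ M → ∃ i, Nonempty (M ≃ₗ[Λ] N i)

/-- `Λ` is representation-finite. -/
def RepFinite : Prop :=
  ClassRepFinite Λ (fun M => Module.Finite Λ M)

/-- `X` belongs to `add N`: it is a direct summand of a finite direct sum of copies of `N`. -/
def InAdd (N X : ModuleCat.{u} Λ) : Prop :=
  ∃ (k : ℕ) (i : X →ₗ[Λ] (Fin k → N)) (p : (Fin k → N) →ₗ[Λ] X),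
    p.comp i = LinearMap.id

/-- A submodule is superfluous (small). -/
def IsSuperfluous {M : ModuleCat.{u} Λ} (N : Submodule Λ M) : Prop :=
  ∀ L : Submodule Λ M, L ⊔ N = ⊤ → L = ⊤

/-- `K` is (isomorphic to) the kernel of a projective cover of `M`, i.e. a first syzygy. -/
def IsSyzygyOf (K M : ModuleCat.{u} Λ) : Prop :=
  ∃ (P : ModuleCat.{u} Λ) (g : P →ₗ[Λ] M), Module.Projective Λ P ∧ Module.Finite Λ P ∧
    Function.Surjective g ∧ IsSuperfluous Λ (LinearMap.ker g) ∧
    Nonempty (K ≃ₗ[Λ] LinearMap.ker g)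

/-- `K` is an `n`-th syzygy of `M`. -/
def IsNthSyzygy : ℕ → ModuleCat.{u} Λ → ModuleCat.{u} Λ → Prop
  | 0, K, M => Nonempty (K ≃ₗ[Λ] M)
  | n + 1, K, M => ∃ K' : ModuleCat.{u} Λ, IsNthSyzygy n K' M ∧ IsSyzygyOf Λ K K'

/-- A class `C` of modules is `m`-syzygy-finite. -/
def MSyzygyFiniteClass (m : ℕ) (C : ModuleCat.{u} Λ → Prop) : Prop :=
  ∃ N : ModuleCat.{u} Λ, Module.Finite Λ N ∧
    ∀ X, C X → ∀ K, IsNthSyzygy Λ m K X → InAdd Λ N K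

/-- A class `C` of modules is syzygy-finite. -/
def SyzygyFiniteClass (C : ModuleCat.{u} Λ → Prop) : Prop :=
  ∃ m : ℕ, MSyzygyFiniteClass Λ m C

/-- `Λ` is 1-syzygy-finite. -/
def OneSyzygyFinite : Prop :=
  MSyzygyFiniteClass Λ 1 (fun X => Module.Finite Λ X)

/-- `Λ` is syzygy-finite. -/
def AlgSyzygyFinite : Prop :=
  SyzygyFiniteClass Λ (fun X => Module.Finite Λ X)

/-- The Jacobson radical of `Λ` (intersection of the maximal left ideals). -/
def jacobsonRad : Ideal Λ := sInf {I : Ideal Λ | I.IsMaximal}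

end Basic

/-- The Jacobson radical of a subalgebra, as a subset of the ambient algebra. -/
def radSet {R A : Type u} [CommRing R] [Ring A] [Algebra R A] (S : Subalgebra R A) : Set A :=
  Subtype.val '' ((jacobsonRad ↥S : Ideal ↥S) : Set ↥S)

section Rel

variable {R : Type u} [CommRing R] {B A : Type u} [Ring B] [Ring A]
  [Algebra R B] [Algebra R A] (φ : B →ₐ[R] A)

/-- The tensor product `A ⊗_B X` of the (A,B)-bimodule `A` with a left `A`-module `X`
(viewed as a `B`-module via `φ`), realized as a quotient of `A ⊗_R X`. -/
noncomputable def relTensor (X : ModuleCat.{u} A) : ModuleCat.{u} A :=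
  letI : Module R X := Module.compHom X (algebraMap R A)
  ModuleCat.of A ((A ⊗[R] X) ⧸ Submodule.span A
    {z : A ⊗[R] X | ∃ (a : A) (b : B) (x : X),
      z = (a * φ b) ⊗ₜ[R] x - a ⊗ₜ[R] (φ b • x)})

/-- `X` is `(A,B)`-projective: a direct summand of `A ⊗_B X`. -/
noncomputable def RelProjective (X : ModuleCat.{u} A) : Prop :=
  ∃ (i : X →ₗ[A] relTensor φ X) (p : relTensor φ X →ₗ[A] X), p.comp i = LinearMap.id

/-- The map `g` admits a `B`-linear map `h` with `g ∘ h ∘ g = g`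
(this encodes `(A,B)`-exactness of the corresponding short exact sequence). -/
def RelSplitB {P X : ModuleCat.{u} A} (g : P →ₗ[A] X) : Prop :=
  ∃ h : X →+ P, (∀ (b : B) (x : X), h (φ b • x) = φ b • h x) ∧
    ∀ p : P, g (h (g p)) = g p

/-- `RelProjDimLE φ n X` : `X` has an `(A,B)`-exact resolution of length `≤ n` by
finitely generated `(A,B)`-projective modules, i.e. relative projective dimension `≤ n`. -/
noncomputable def RelProjDimLE : ℕ → ModuleCat.{u} A → Prop
  | 0, X => RelProjective φ X
  | n + 1, X => ∃ (P : ModuleCat.{u} A) (g : P →ₗ[A] X),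
      RelProjective φ P ∧ Module.Finite A P ∧ Function.Surjective g ∧ RelSplitB φ g ∧
      RelProjDimLE n (ModuleCat.of A (LinearMap.ker g))

/-- Restriction of scalars along `φ` of an `A`-module, as an object of `ModuleCat B`. -/
def resMod (X : ModuleCat.{u} A) : ModuleCat.{u} B :=
  @ModuleCat.of B _ X _ (Module.compHom X φ.toRingHom)

/-- The right `B`-module structure on `A` induced by `φ`. -/
def rightModB : Module Bᵐᵒᵖ A :=
  Module.compHom A (RingHom.op φ.toRingHom)

end Rel

variable {R : Type u} [CommRing R] [IsArtinianRing R]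
  {B A : Type u} [Ring B] [Ring A] [Algebra R B] [Algebra R A]
  [Module.Finite R B] [Module.Finite R A]

section ProjectiveDimension

open CategoryTheory

section Ring

variable (Λ : Type u) [Ring Λ]

/-- Projective dimension at most `n`, expressed by the vanishing of `Ext`. Unlike `ProjDimLE`, which
asks for a resolution by finitely generated projectives, it is visibly additive in short exact
sequences; see `projDimLE_iff_pdLE` for the comparison. -/
abbrev PdLE (n : ℕ) (M : Type u) [AddCommGroup M] [Module Λ M] : Prop :=
  HasProjectiveDimensionLE (ModuleCat.of Λ M) n

variable {Λ} {M N L : Type u} [AddCommGroup M] [Module Λ M] [AddCommGroup N] [Module Λ N]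
  [AddCommGroup L] [Module Λ L] {n : ℕ}

theorem pdLE_zero_iff : PdLE Λ 0 M ↔ Module.Projective Λ M := by
  rw [IsProjective.iff_projective, projective_iff_hasProjectiveDimensionLE_zero]

theorem PdLE.mono {m : ℕ} (h : PdLE Λ n M) (hnm : n ≤ m) : PdLE Λ m M :=
  hasProjectiveDimensionLT_of_ge _ (n + 1) (m + 1) (by lia)

theorem PdLE.of_projective [Module.Projective Λ M] : PdLE Λ n M :=
  (pdLE_zero_iff.2 ‹_›).mono n.zero_le

theorem PdLE.of_retract (h : PdLE Λ n M) (i : N →ₗ[Λ] M) (p : M →ₗ[Λ] N)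
    (hpi : p ∘ₗ i = LinearMap.id) : PdLE Λ n N :=
  let r : Retract (ModuleCat.of Λ N) (ModuleCat.of Λ M) :=
    { i := ModuleCat.ofHom i
      r := ModuleCat.ofHom p
      retract := by rw [← ModuleCat.ofHom_comp, hpi, ModuleCat.ofHom_id] }
  r.hasProjectiveDimensionLT (n + 1)

theorem pdLE_congr (e : M ≃ₗ[Λ] N) : PdLE Λ n M ↔ PdLE Λ n N :=
  ⟨fun h => h.of_retract e.symm e (by simp), fun h => h.of_retract e e.symm (by simp)⟩

section Exact

variable {f : M →ₗ[Λ] N} {g : N →ₗ[Λ] L} (hf : Function.Injective f) (hg : Function.Surjective g)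
  (hfg : Function.Exact f g)
include hf hg hfg

theorem shortExact_shortComplexOfCompEqZero :
    (ModuleCat.shortComplexOfCompEqZero f g hfg.linearMap_comp_eq_zero).ShortExact :=
  ModuleCat.shortComplex_shortExact _ hfg hf hg

theorem PdLE.left_of_exact (hN : PdLE Λ n N) (hL : PdLE Λ (n + 1) L) : PdLE Λ n M :=
  (shortExact_shortComplexOfCompEqZero hf hg hfg).hasProjectiveDimensionLT_X₁ (n + 1) hN hL

theorem PdLE.middle_of_exact (hM : PdLE Λ n M) (hL : PdLE Λ n L) : PdLE Λ n N :=
  (shortExact_shortComplexOfCompEqZero hf hg hfg).hasProjectiveDimensionLT_X₂ (n + 1) hM hL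

theorem PdLE.right_of_exact (hM : PdLE Λ n M) (hN : PdLE Λ (n + 1) N) : PdLE Λ (n + 1) L :=
  (shortExact_shortComplexOfCompEqZero hf hg hfg).hasProjectiveDimensionLT_X₃ (n + 1) hM hN

end Exact

theorem pdLE_prod_iff : PdLE Λ n (M × N) ↔ PdLE Λ n M ∧ PdLE Λ n N :=
  ⟨fun h => ⟨h.of_retract (.inl Λ M N) (.fst Λ M N) (LinearMap.fst_comp_inl ..),
    h.of_retract (.inr Λ M N) (.snd Λ M N) (LinearMap.snd_comp_inr ..)⟩,
  fun h => .middle_of_exact LinearMap.inl_injective LinearMap.snd_surjective .inl_snd h.1 h.2⟩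

theorem PdLE.pi_fin (h : PdLE Λ n M) (k : ℕ) : PdLE Λ n (Fin k → M) := by
  induction k with
  | zero => exact .of_projective
  | succ k ih => exact (pdLE_congr (Fin.consLinearEquiv Λ fun _ => M)).1 (pdLE_prod_iff.2 ⟨h, ih⟩)

theorem ProjDimLE.pdLE {M : ModuleCat.{u} Λ} (h : ProjDimLE Λ n M) : PdLE Λ n M := by
  induction n generalizing M with
  | zero => exact pdLE_zero_iff.2 h
  | succ n ih =>
    obtain ⟨P, g, hP, -, hg, hK⟩ := h
    exact .right_of_exact (Submodule.injective_subtype _) hg g.exact_subtype_ker_map (ih hK)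
      .of_projective

theorem PdLE.projDimLE [IsNoetherianRing Λ] {M : ModuleCat.{u} Λ} [Module.Finite Λ M]
    (h : PdLE Λ n M) : ProjDimLE Λ n M := by
  induction n generalizing M with
  | zero => exact pdLE_zero_iff.1 h
  | succ n ih =>
    obtain ⟨k, g, hg⟩ := Module.Finite.exists_fin' Λ M
    have hK : PdLE Λ n (LinearMap.ker g) :=
      .left_of_exact (Submodule.injective_subtype _) hg g.exact_subtype_ker_map .of_projective h
    exact ⟨.of Λ (Fin k → Λ), g, inferInstanceAs (Module.Projective Λ (Fin k → Λ)),
      inferInstanceAs (Module.Finite Λ (Fin k → Λ)), hg, ih (M := .of Λ (LinearMap.ker g)) hK⟩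

theorem projDimLE_iff_pdLE [IsNoetherianRing Λ] {M : ModuleCat.{u} Λ} [Module.Finite Λ M] :
    ProjDimLE Λ n M ↔ PdLE Λ n M :=
  ⟨ProjDimLE.pdLE, PdLE.projDimLE⟩

end Ring

section RepFinite

variable {Λ : Type u} [Ring Λ] [IsArtinianRing Λ]

@[elab_as_elim]
theorem induction_on_modIndec {p : ModuleCat.{u} Λ → Prop} (M : ModuleCat.{u} Λ) [Module.Finite Λ M]
    (subsingleton : ∀ M : ModuleCat.{u} Λ, Subsingleton M → p M)
    (indec : ∀ M : ModuleCat.{u} Λ, Module.Finite Λ M → ModIndec Λ M → p M)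
    (isCompl : ∀ (M : ModuleCat.{u} Λ) (N₁ N₂ : Submodule Λ M), IsCompl N₁ N₂ →
      p (.of Λ N₁) → p (.of Λ N₂) → p M) : p M := by
  induction hl : Module.length Λ M using WellFoundedLT.induction generalizing M with
  | ind l ih =>
    subst hl
    rcases subsingleton_or_nontrivial M with hM | hM
    · exact subsingleton M hM
    by_cases hind : ModIndec Λ M
    · exact indec M ‹_› hind
    simp only [ModIndec, hM, true_and, not_forall, not_or] at hind
    obtain ⟨N₁, N₂, hN, h₁, h₂⟩ := hind
    have hN₁ : N₁ < ⊤ := lt_top_iff_ne_top.2 fun h => h₂ (eq_bot_of_top_isCompl (h ▸ hN))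
    have hN₂ : N₂ < ⊤ := lt_top_iff_ne_top.2 fun h => h₁ (eq_bot_of_isCompl_top (h ▸ hN))
    exact isCompl M N₁ N₂ hN (ih _ (Submodule.length_lt hN₁.ne) (.of Λ N₁) rfl)
      (ih _ (Submodule.length_lt hN₂.ne) (.of Λ N₂) rfl)

theorem pdLE_of_forall_modIndec {f : ℕ}
    (hf : ∀ M : ModuleCat.{u} Λ, Module.Finite Λ M → ModIndec Λ M → (∃ k, PdLE Λ k M) → PdLE Λ f M)
    (M : ModuleCat.{u} Λ) [Module.Finite Λ M] (hM : ∃ k, PdLE Λ k M) : PdLE Λ f M := by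
  induction M using induction_on_modIndec with
  | subsingleton M hM =>
    have : Module.Free Λ M := .of_subsingleton Λ M
    have : Module.Projective Λ M := .of_free
    exact .of_projective
  | indec M hfin hind => exact hf M hfin hind hM
  | isCompl M N₁ N₂ hN ih₁ ih₂ =>
    obtain ⟨k, hk⟩ := hM
    have e := Submodule.prodEquivOfIsCompl N₁ N₂ hN
    have hk' := pdLE_prod_iff.1 ((pdLE_congr e).2 hk)
    exact (pdLE_congr e).1 (pdLE_prod_iff.2 ⟨ih₁ ⟨k, hk'.1⟩, ih₂ ⟨k, hk'.2⟩⟩)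

theorem RepFinite.finFinDim (h : RepFinite Λ) : FinFinDim Λ := by
  obtain ⟨k, N, hN⟩ := h
  choose! d hd using fun i (hi : ∃ l, PdLE Λ l (N i)) => hi
  refine ⟨Finset.univ.sup d, fun M _ ⟨m, hm⟩ => projDimLE_iff_pdLE.2 <|
    pdLE_of_forall_modIndec (fun M' hM' hind ⟨l, hl⟩ => ?_) M ⟨m, hm.pdLE⟩⟩
  obtain ⟨i, ⟨e⟩⟩ := hN M' hM' hind
  exact (pdLE_congr e).2 <|
    (hd i ⟨l, (pdLE_congr e).1 hl⟩).mono (Finset.le_sup (Finset.mem_univ i))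

end RepFinite

end ProjectiveDimension

theorem exists_semilinear_lift {B A M P Q : Type*} [Ring B] [Ring A] (φ : B →+* A)
    [AddCommGroup M] [Module B M] [Module.Projective B M] [AddCommGroup P] [Module A P]
    [AddCommGroup Q] [Module A Q] (f : P →ₗ[A] Q) (hf : Function.Surjective f) (h : M →ₛₗ[φ] Q) :
    ∃ l : M →ₛₗ[φ] P, ∀ m, f (l m) = h m := by
  let : Module B P := Module.compHom P φ
  let : Module B Q := Module.compHom Q φ
  let fB : P →ₗ[B] Q := { f with map_smul' := fun b => f.map_smul (φ b) }
  let hB : M →ₗ[B] Q := { h with map_smul' := h.map_smulₛₗ }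
  obtain ⟨l, hl⟩ := Module.projective_lifting_property fB hB hf
  exact ⟨{ l with map_smul' := l.map_smul }, LinearMap.congr_fun hl⟩

section Induction

variable {R B A : Type u} [CommRing R] [Ring B] [Ring A] [Algebra R B] [Algebra R A]
  (φ : B →ₐ[R] A)

variable (M : Type u) [AddCommGroup M] [Module R M] [Module B M]

/-- The relations `aφ(b) ⊗ m = a ⊗ bm` presenting `A ⊗_B M` as a quotient of `A ⊗_R M`. -/
def inducedRel : Submodule A (A ⊗[R] M) :=
  Submodule.span A {z | ∃ (a : A) (b : B) (m : M), z = (a * φ b) ⊗ₜ[R] m - a ⊗ₜ[R] (b • m)}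

/-- The induced module `A ⊗_B M` of a left `B`-module `M`. It is set up so that `relTensor φ X` is
definitionally `Induced φ (resMod φ X)`. -/
abbrev Induced : Type u := (A ⊗[R] M) ⧸ inducedRel φ M

namespace Induced

/-- The unit `m ↦ 1 ⊗ m` of the induction-restriction adjunction. Here and below, `B`-linear maps
into an `A`-module are encoded as `φ`-semilinear maps. -/
def unit : M →ₛₗ[φ.toRingHom] Induced φ M where
  toFun m := (inducedRel φ M).mkQ (1 ⊗ₜ m)
  map_add' m m' := by rw [TensorProduct.tmul_add, map_add]
  map_smul' b m := by
    have hrel : (1 * φ b) ⊗ₜ[R] m - 1 ⊗ₜ[R] (b • m) ∈ inducedRel φ M :=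
      Submodule.subset_span ⟨1, b, m, rfl⟩
    rw [← map_smul, TensorProduct.smul_tmul', smul_eq_mul, mul_one]
    simpa using ((Submodule.Quotient.eq _).2 hrel).symm

variable {M} {N L Z W : Type u} [AddCommGroup N] [Module R N] [Module B N]
  [AddCommGroup L] [Module R L] [Module B L] [AddCommGroup Z] [Module A Z]
  [AddCommGroup W] [Module A W]

theorem mkQ_tmul (a : A) (m : M) : (inducedRel φ M).mkQ (a ⊗ₜ m) = a • unit φ M m := by
  change _ = a • (inducedRel φ M).mkQ (1 ⊗ₜ m)
  rw [← map_smul, TensorProduct.smul_tmul', smul_eq_mul, mul_one]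

variable {φ} in
@[elab_as_elim]
theorem induction_on {p : Induced φ M → Prop} (z : Induced φ M) (zero : p 0)
    (smul_unit : ∀ (a : A) (m : M), p (a • unit φ M m))
    (add : ∀ z z', p z → p z' → p (z + z')) : p z := by
  obtain ⟨z, rfl⟩ := (inducedRel φ M).mkQ_surjective z
  induction z with
  | zero => exact zero
  | tmul a m => exact mkQ_tmul φ a m ▸ smul_unit a m
  | add z z' h h' => exact map_add (inducedRel φ M).mkQ z z' ▸ add _ _ h h'

variable {φ} in
theorem hom_ext {f g : Induced φ M →ₗ[A] Z} (h : ∀ m, f (unit φ M m) = g (unit φ M m)) : f = g := by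
  refine LinearMap.ext fun z => ?_
  induction z using induction_on with
  | zero => simp only [map_zero]
  | smul_unit a m => simp only [map_smul, h]
  | add z z' hz hz' => simp only [map_add, hz, hz']

variable [IsScalarTower R B M]

/-- The `A`-linear extension `a ⊗ m ↦ a • h m` of a `B`-linear map `h`. -/
def lift (h : M →ₛₗ[φ.toRingHom] Z) : Induced φ M →ₗ[A] Z :=
  letI : Module R Z := Module.compHom Z (algebraMap R A)
  haveI : IsScalarTower R A Z := .of_algebraMap_smul fun _ _ => rfl
  let hR : M →ₗ[R] Z :=
    { h with
      map_smul' r m := by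
        change h (r • m) = algebraMap R A r • h m
        rw [← algebraMap_smul B, map_smulₛₗ]
        exact congrArg (· • h m) (φ.commutes r) }
  (inducedRel φ M).liftQ
    (TensorProduct.AlgebraTensorModule.lift (LinearMap.toSpanSingleton A (M →ₗ[R] Z) hR)) <| by
    refine Submodule.span_le.2 ?_
    rintro _ ⟨a, b, m, rfl⟩
    rw [SetLike.mem_coe, LinearMap.mem_ker, map_sub]
    have hb : h (b • m) = φ b • h m := map_smulₛₗ h b m
    change (a * φ b) • h m - a • h (b • m) = 0
    rw [hb, mul_smul, sub_self]

@[simp]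
theorem lift_unit (h : M →ₛₗ[φ.toRingHom] Z) (m : M) : lift φ h (unit φ M m) = h m :=
  one_smul A (h m)

instance [Module.Projective B M] : Module.Projective A (Induced φ M) := by
  refine Module.Projective.of_lifting_property'' fun f hf => ?_
  obtain ⟨h, hh⟩ := exists_semilinear_lift φ.toRingHom f hf (unit φ M)
  exact ⟨lift φ h, hom_ext fun m => (congrArg f (lift_unit φ h m)).trans (hh m)⟩

/-- Functoriality of `A ⊗_B -`. -/
def map (f : M →ₗ[B] N) : Induced φ M →ₗ[A] Induced φ N :=
  lift φ ((unit φ N).comp f)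

@[simp]
theorem map_unit (f : M →ₗ[B] N) (m : M) : map φ f (unit φ M m) = unit φ N (f m) :=
  lift_unit φ _ m

theorem map_surjective {f : M →ₗ[B] N} (hf : Function.Surjective f) :
    Function.Surjective (map φ f) := fun z => by
  induction z using induction_on with
  | zero => exact ⟨0, map_zero _⟩
  | smul_unit a m =>
    obtain ⟨m, rfl⟩ := hf m
    exact ⟨a • unit φ M m, by rw [map_smul, map_unit]⟩
  | add z z' hz hz' =>
    obtain ⟨w, rfl⟩ := hz
    obtain ⟨w', rfl⟩ := hz'
    exact ⟨w + w', map_add ..⟩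

variable [IsScalarTower R B N]

theorem map_comp_apply_eq_zero {f : M →ₗ[B] N} {g : N →ₗ[B] L} (hgf : g ∘ₗ f = 0)
    (z : Induced φ M) : map φ g (map φ f z) = 0 := by
  have : map φ g ∘ₗ map φ f = 0 := hom_ext fun m => by
    have hm : g (f m) = 0 := LinearMap.congr_fun hgf m
    rw [LinearMap.comp_apply, map_unit, map_unit, hm, map_zero, LinearMap.zero_apply]
  exact LinearMap.congr_fun this z

end Induced

/-- A finite dual basis of `A` as a right `B`-module; it exists exactly when `A` is finitely
generated projective over `Bᵐᵒᵖ`. -/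
structure RightDualBasis (ι : Type*) [Fintype ι] where
  elem : ι → A
  coord : ι → A →ₗ[R] B
  coord_mul : ∀ i a b, coord i (a * φ b) = coord i a * b
  sum_elem_mul_coord : ∀ a, ∑ i, elem i * φ (coord i a) = a

namespace RightDualBasis

variable {φ} {ι : Type*} [Fintype ι] (e : RightDualBasis φ ι)
  {M : Type u} [AddCommGroup M] [Module R M] [Module B M] [IsScalarTower R B M]
  {N : Type u} [AddCommGroup N] [Module R N] [Module B N] [IsScalarTower R B N]
  {L : Type u} [AddCommGroup L] [Module R L] [Module B L] [IsScalarTower R B L]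

/-- The `i`-th coordinate `a ⊗ m ↦ coord i a • m` on `A ⊗_B M`. -/
def inducedCoord (i : ι) : Induced φ M →+ M :=
  let t : A ⊗[R] M →ₗ[R] M :=
    TensorProduct.lift ((Algebra.lsmul R R M).toLinearMap ∘ₗ e.coord i)
  QuotientAddGroup.lift (inducedRel φ M).toAddSubgroup t.toAddMonoidHom fun z hz => by
    induction hz using Submodule.closure_induction with
    | zero => exact zero_mem _
    | add z z' _ _ h h' => exact add_mem h h'
    | smul_mem c z hz =>
      obtain ⟨a, b, m, rfl⟩ := hz
      change t (c • ((a * φ b) ⊗ₜ[R] m - a ⊗ₜ[R] (b • m))) = 0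
      rw [smul_sub, TensorProduct.smul_tmul', TensorProduct.smul_tmul', smul_eq_mul, smul_eq_mul,
        ← mul_assoc, map_sub]
      change e.coord i (c * a * φ b) • m - e.coord i (c * a) • b • m = 0
      rw [e.coord_mul, mul_smul, sub_self]

theorem inducedCoord_smul_unit (i : ι) (a : A) (m : M) :
    e.inducedCoord i (a • Induced.unit φ M m) = e.coord i a • m := by
  rw [← Induced.mkQ_tmul]
  rfl

theorem inducedCoord_map (i : ι) (f : M →ₗ[B] N) (z : Induced φ M) :
    e.inducedCoord i (Induced.map φ f z) = f (e.inducedCoord i z) := by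
  induction z using Induced.induction_on with
  | zero => simp only [map_zero]
  | smul_unit a m => simp only [map_smul, Induced.map_unit, inducedCoord_smul_unit]
  | add z z' h h' => simp only [map_add, h, h']

theorem sum_elem_smul_unit_inducedCoord (z : Induced φ M) :
    ∑ i, e.elem i • Induced.unit φ M (e.inducedCoord i z) = z := by
  induction z using Induced.induction_on with
  | zero => simp only [map_zero, smul_zero, Finset.sum_const_zero]
  | smul_unit a m =>
    have hunit (b : B) : Induced.unit φ M (b • m) = φ b • Induced.unit φ M m := map_smulₛₗ _ b m
    simp only [inducedCoord_smul_unit, hunit, smul_smul, ← Finset.sum_smul, e.sum_elem_mul_coord]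
  | add z z' h h' => simp only [map_add, smul_add, Finset.sum_add_distrib, h, h']

include e

theorem map_injective {f : M →ₗ[B] N} (hf : Function.Injective f) :
    Function.Injective (Induced.map φ f) := by
  refine (injective_iff_map_eq_zero _).2 fun z hz => ?_
  have hcoord (i : ι) : e.inducedCoord i z = 0 :=
    hf (by rw [← e.inducedCoord_map, hz, map_zero, map_zero])
  rw [← e.sum_elem_smul_unit_inducedCoord z]
  simp only [hcoord, map_zero, smul_zero, Finset.sum_const_zero]

theorem map_exact {f : M →ₗ[B] N} {g : N →ₗ[B] L} (hfg : Function.Exact f g) :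
    Function.Exact (Induced.map φ f) (Induced.map φ g) := by
  refine fun z => ⟨fun hz => ?_, ?_⟩
  · have hcoord (i : ι) : g (e.inducedCoord i z) = 0 := by
      rw [← e.inducedCoord_map, hz, map_zero]
    choose m hm using fun i => (hfg _).1 (hcoord i)
    refine ⟨∑ i, e.elem i • Induced.unit φ M (m i), ?_⟩
    simp only [map_sum, map_smul, Induced.map_unit, hm, e.sum_elem_smul_unit_inducedCoord]
  · rintro ⟨z, rfl⟩
    exact Induced.map_comp_apply_eq_zero φ hfg.linearMap_comp_eq_zero z

theorem pdLE_induced {n : ℕ} {M : ModuleCat.{u} B} [Module R M] [IsScalarTower R B M]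
    (h : ProjDimLE B n M) : PdLE A n (Induced φ M) := by
  induction n generalizing M with
  | zero =>
    have : Module.Projective B M := h
    exact .of_projective
  | succ n ih =>
    obtain ⟨P, g, hP, -, hg, hK⟩ := h
    let : Module R P := Module.compHom P (algebraMap R B)
    have : IsScalarTower R B P := .of_algebraMap_smul fun _ _ => rfl
    exact .right_of_exact (e.map_injective (LinearMap.ker g).injective_subtype)
      (Induced.map_surjective φ hg) (e.map_exact g.exact_subtype_ker_map)
      (ih (M := .of B (LinearMap.ker g)) hK) .of_projective

end RightDualBasis

end Induction

section Restriction

variable {R B A : Type u} [CommRing R] [Ring B] [Ring A] [Algebra R B] [Algebra R A]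
  (φ : B →ₐ[R] A)

namespace resMod

variable (X : ModuleCat.{u} A)

instance : Module R (resMod φ X) :=
  Module.compHom X (algebraMap R A)

instance : IsScalarTower R B (resMod φ X) :=
  .of_algebraMap_smul fun r x => congrArg (fun a : A => a • (show X from x)) (φ.commutes r)

instance [Module.Finite R A] [Module.Finite A X] : Module.Finite R (resMod φ X) :=
  let : Module R X := Module.compHom X (algebraMap R A)
  have : IsScalarTower R A X := .of_algebraMap_smul fun _ _ => rfl
  Module.Finite.trans (R := R) A X

instance [Module.Finite R A] [Module.Finite A X] : Module.Finite B (resMod φ X) :=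
  .of_restrictScalars_finite R B _

variable {X} {Y : ModuleCat.{u} A}

/-- Functoriality of restriction of scalars along `φ`. -/
def map (f : X →ₗ[A] Y) : resMod φ X →ₗ[B] resMod φ Y :=
  { f with map_smul' := fun b => f.map_smul (φ b) }

end resMod

variable {φ}

theorem PdLE.resMod_of_projective {d : ℕ} (hd : PdLE B d (resMod φ (.of A A))) (P : ModuleCat.{u} A)
    [Module.Finite A P] [Module.Projective A P] : PdLE B d (resMod φ P) := by
  obtain ⟨n, p, i, -, -, hpi⟩ := Module.Finite.exists_comp_eq_id_of_projective A P
  let e : resMod φ (.of A (Fin n → A)) ≃ₗ[B] (Fin n → resMod φ (.of A A)) :=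
    { AddEquiv.refl _ with map_smul' := fun _ _ => rfl }
  exact ((pdLE_congr e).2 (hd.pi_fin n)).of_retract (resMod.map φ (Y := .of A (Fin n → A)) i)
    (resMod.map φ (X := .of A (Fin n → A)) p) (LinearMap.ext fun x => LinearMap.congr_fun hpi x)

theorem ProjDimLE.pdLE_resMod [IsNoetherianRing A] {d k : ℕ} (hd : PdLE B d (resMod φ (.of A A)))
    {X : ModuleCat.{u} A} [Module.Finite A X] (hX : ProjDimLE A k X) :
    PdLE B (d + k) (resMod φ X) := by
  induction k generalizing X with
  | zero =>
    have : Module.Projective A X := hX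
    exact hd.resMod_of_projective X
  | succ k ih =>
    obtain ⟨P, g, hP, hPf, hg, hK⟩ := hX
    have : Module.Finite A (ModuleCat.of A g.ker) := inferInstanceAs (Module.Finite A g.ker)
    exact .right_of_exact (f := resMod.map φ (X := .of A g.ker) g.ker.subtype)
      (g := resMod.map φ g) g.ker.injective_subtype hg g.exact_subtype_ker_map (ih hK)
      ((hd.resMod_of_projective P).mono (by lia))

theorem exists_rightDualBasis [Module.Finite R A]
    (h : @Module.Projective Bᵐᵒᵖ _ A _ (rightModB φ)) :
    ∃ n : ℕ, Nonempty (RightDualBasis φ (Fin n)) := by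
  let : Module Bᵐᵒᵖ A := rightModB φ
  have op_smul (b : B) (a : A) : MulOpposite.op b • a = a * φ b := rfl
  have : IsScalarTower R Bᵐᵒᵖ A := .of_algebraMap_smul fun r a => by
    rw [MulOpposite.algebraMap_apply, op_smul, φ.commutes, ← Algebra.commutes, Algebra.smul_def]
  have : Module.Finite Bᵐᵒᵖ A := .of_restrictScalars_finite R Bᵐᵒᵖ A
  obtain ⟨n, p, i, -, -, hpi⟩ := Module.Finite.exists_comp_eq_id_of_projective Bᵐᵒᵖ A
  refine ⟨n, ⟨{
    elem := fun j => p (Pi.single j 1)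
    coord := fun j => (MulOpposite.opLinearEquiv R).symm.toLinearMap ∘ₗ
      (LinearMap.proj j ∘ₗ i).restrictScalars R
    coord_mul := fun j a b => ?_
    sum_elem_mul_coord := fun a => ?_ }⟩⟩
  · change (i (MulOpposite.op b • a) j).unop = _
    rw [map_smul]
    rfl
  · calc
      ∑ j, p (Pi.single j 1) * φ (i a j).unop = p (∑ j, i a j • Pi.single j 1) := by
        simp only [map_sum, map_smul]
        rfl
      _ = p (i a) := by simp only [← Pi.single_smul, smul_eq_mul, mul_one, Finset.univ_sum_single]
      _ = a := LinearMap.congr_fun hpi a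

end Restriction

section Relative

variable {R B A : Type u} [CommRing R] [Ring B] [Ring A] [Algebra R B] [Algebra R A]
  (φ : B →ₐ[R] A)

/-- The lifting property against surjections that split over `B`; it characterizes the
`(A, B)`-projective modules, see `relProjective_iff_hasRelLifting`. -/
def HasRelLifting (X : Type u) [AddCommGroup X] [Module A X] : Prop :=
  ∀ ⦃P Y : ModuleCat.{u} A⦄ (g : P →ₗ[A] Y), Function.Surjective g → RelSplitB φ g →
    ∀ f : X →ₗ[A] Y, ∃ l : X →ₗ[A] P, g ∘ₗ l = f

theorem hasRelLifting_induced (M : Type u) [AddCommGroup M] [Module R M] [Module B M]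
    [IsScalarTower R B M] : HasRelLifting φ (Induced φ M) := by
  intro P Y g hg ⟨s, hsB, hs⟩ f
  have hgs (y : Y) : g (s y) = y := (hg.forall (p := fun y => g (s y) = y)).2 hs y
  let η : M →ₛₗ[φ.toRingHom] P :=
    { toFun := fun m => s (f (Induced.unit φ M m))
      map_add' := fun m m' => by simp only [map_add]
      map_smul' := fun b m => by
        rw [map_smulₛₗ, map_smul]
        exact hsB b _ }
  refine ⟨Induced.lift φ η, Induced.hom_ext fun m => ?_⟩
  exact (congrArg g (Induced.lift_unit φ η m)).trans (hgs _)

theorem hasRelLifting_relTensor (X : ModuleCat.{u} A) : HasRelLifting φ (relTensor φ X) :=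
  hasRelLifting_induced φ (resMod φ X)

/-- The multiplication map `a ⊗ x ↦ a • x`. -/
def relTensorCounit (X : ModuleCat.{u} A) : relTensor φ X →ₗ[A] X :=
  Induced.lift φ (M := resMod φ X)
    { AddMonoidHom.id X with map_smul' := fun _ _ => rfl }

theorem relTensorCounit_unit {X : ModuleCat.{u} A} (x : X) :
    relTensorCounit φ X (Induced.unit φ (resMod φ X) x) = x :=
  Induced.lift_unit φ (M := resMod φ X) _ x

theorem relTensorCounit_surjective (X : ModuleCat.{u} A) :
    Function.Surjective (relTensorCounit φ X) := fun x =>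
  ⟨_, relTensorCounit_unit φ x⟩

theorem relSplitB_relTensorCounit (X : ModuleCat.{u} A) : RelSplitB φ (relTensorCounit φ X) :=
  ⟨(Induced.unit φ (resMod φ X)).toAddMonoidHom, (Induced.unit φ (resMod φ X)).map_smulₛₗ,
    fun _ => relTensorCounit_unit φ _⟩

instance [Module.Finite R A] (X : ModuleCat.{u} A) [Module.Finite A X] :
    Module.Finite A (relTensor φ X) :=
  inferInstanceAs (Module.Finite A (Induced φ (resMod φ X)))

variable {φ} {X Y : ModuleCat.{u} A}

theorem HasRelLifting.of_retract {M N : Type u} [AddCommGroup M] [Module A M] [AddCommGroup N]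
    [Module A N] (h : HasRelLifting φ M) (i : N →ₗ[A] M) (p : M →ₗ[A] N)
    (hpi : p ∘ₗ i = LinearMap.id) : HasRelLifting φ N := by
  intro P Y g hg hs f
  obtain ⟨l, hl⟩ := h g hg hs (f ∘ₗ p)
  exact ⟨l ∘ₗ i, by rw [← LinearMap.comp_assoc, hl, LinearMap.comp_assoc, hpi, LinearMap.comp_id]⟩

theorem HasRelLifting.prod {M N : Type u} [AddCommGroup M] [Module A M] [AddCommGroup N]
    [Module A N] (hM : HasRelLifting φ M) (hN : HasRelLifting φ N) : HasRelLifting φ (M × N) := by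
  intro P Y g hg hs f
  obtain ⟨l, hl⟩ := hM g hg hs (f ∘ₗ .inl A M N)
  obtain ⟨l', hl'⟩ := hN g hg hs (f ∘ₗ .inr A M N)
  exact ⟨l.coprod l', by rw [LinearMap.comp_coprod, hl, hl', LinearMap.coprod_comp_inl_inr]⟩

theorem relProjective_iff_hasRelLifting : RelProjective φ X ↔ HasRelLifting φ X := by
  refine ⟨fun ⟨i, p, hpi⟩ => (hasRelLifting_relTensor φ X).of_retract i p hpi, fun h => ?_⟩
  obtain ⟨i, hi⟩ :=
    h _ (relTensorCounit_surjective φ X) (relSplitB_relTensorCounit φ X) LinearMap.id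
  exact ⟨i, _, hi⟩

variable (φ) in
/-- `M` is a direct summand of `N ⊕ Q` for some `(A, B)`-projective module `Q`. -/
def RelStableSummand (M N : Type u) [AddCommGroup M] [Module A M] [AddCommGroup N]
    [Module A N] : Prop :=
  ∃ Q : ModuleCat.{u} A, HasRelLifting φ Q ∧
    ∃ (i : M →ₗ[A] N × Q) (p : N × Q →ₗ[A] M), p ∘ₗ i = LinearMap.id

namespace RelStableSummand

variable (φ X) in
theorem refl : RelStableSummand φ X X :=
  ⟨.of A PUnit, fun _ _ _ _ _ _ => ⟨0, LinearMap.ext fun x => by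
    rw [Subsingleton.elim x 0, map_zero, map_zero]⟩, .inl A X _, .fst A X _,
    LinearMap.fst_comp_inl ..⟩

theorem relProjective (h : RelStableSummand φ X Y) (hY : RelProjective φ Y) :
    RelProjective φ X := by
  obtain ⟨Q, hQ, i, p, hpi⟩ := h
  exact relProjective_iff_hasRelLifting.2 <|
    ((relProjective_iff_hasRelLifting.1 hY).prod hQ).of_retract i p hpi

/-- A one-sided Schanuel lemma for relative syzygies. With `α'` lifting `i` and `β` lifting `p`, the
map `k ↦ (α k, k)` is split by `(x, y) ↦ β (x, 0) + (y - β (α' y))`. -/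
theorem ker (h : RelStableSummand φ X Y) {P P' : ModuleCat.{u} A} (hP : HasRelLifting φ P)
    (hP' : HasRelLifting φ P') {g : P →ₗ[A] Y} (hg : Function.Surjective g) (hs : RelSplitB φ g)
    {g' : P' →ₗ[A] X} (hg' : Function.Surjective g') (hs' : RelSplitB φ g') :
    RelStableSummand φ g'.ker g.ker := by
  obtain ⟨Q, hQ, i, p, hpi⟩ := h
  obtain ⟨α, hα⟩ := hP' g hg hs (.fst A Y Q ∘ₗ i ∘ₗ g')
  obtain ⟨β, hβ⟩ := (hP.prod hQ) g' hg' hs' (p ∘ₗ g.prodMap .id)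
  let α' : P' →ₗ[A] P × Q := α.prod (.snd A Y Q ∘ₗ i ∘ₗ g')
  have hα' : g.prodMap .id ∘ₗ α' = i ∘ₗ g' :=
    LinearMap.ext fun t => Prod.ext (LinearMap.congr_fun hα t) rfl
  have hβα : g' ∘ₗ β ∘ₗ α' = g' := by
    rw [← LinearMap.comp_assoc, hβ, LinearMap.comp_assoc, hα', ← LinearMap.comp_assoc, hpi,
      LinearMap.id_comp]
  replace hα (t : P') : g (α t) = (i (g' t)).1 := LinearMap.congr_fun hα t
  replace hβ (x : P) : g' (β (x, 0)) = p (g x, 0) := LinearMap.congr_fun hβ (x, 0)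
  replace hβα (t : P') : g' (β (α' t)) = g' t := LinearMap.congr_fun hβα t
  refine ⟨P', hP',
    ((α ∘ₗ g'.ker.subtype).codRestrict g.ker fun k => ?_).prod g'.ker.subtype,
    ((β ∘ₗ .inl A P Q ∘ₗ g.ker.subtype).coprod (.id - β ∘ₗ α')).codRestrict g'.ker fun x => ?_,
    LinearMap.ext fun k => Subtype.ext ?_⟩
  · have hk : g' k = 0 := k.2
    change g (α k) = 0
    rw [hα, hk, map_zero, Prod.fst_zero]
  · have hx : g x.1 = 0 := x.1.2
    change g' (β (x.1, 0) + (x.2 - β (α' x.2))) = 0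
    rw [map_add, map_sub, hβ, hβα, sub_self, add_zero, hx, Prod.mk_zero_zero, map_zero]
  · have hk : α' k = (α k, 0) := by
      have hk : g' k = 0 := k.2
      change (α k, (i (g' k)).2) = _
      rw [hk, map_zero, Prod.snd_zero]
    change β (α k, 0) + (k - β (α' k)) = (k : P')
    rw [hk, add_sub_cancel]

end RelStableSummand

section Noetherian

variable [IsNoetherianRing A] [Module.Finite R A] {n : ℕ}

theorem RelProjDimLE.of_relStableSummand [Module.Finite A X] (hY : RelProjDimLE φ n Y)
    (h : RelStableSummand φ X Y) : RelProjDimLE φ n X := by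
  induction n generalizing X Y with
  | zero => exact h.relProjective hY
  | succ n ih =>
    obtain ⟨P, g, hP, -, hg, hs, hK⟩ := hY
    have hT := hasRelLifting_relTensor φ X
    have hε := relTensorCounit_surjective φ X
    have hεs := relSplitB_relTensorCounit φ X
    have : Module.Finite A (ModuleCat.of A (relTensorCounit φ X).ker) :=
      inferInstanceAs (Module.Finite A (relTensorCounit φ X).ker)
    exact ⟨relTensor φ X, relTensorCounit φ X, relProjective_iff_hasRelLifting.2 hT, inferInstance,
      hε, hεs, ih hK (h.ker (relProjective_iff_hasRelLifting.1 hP) hT hg hs hε hεs)⟩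

theorem RelProjDimLE.ker_relTensorCounit [Module.Finite A X] (hX : RelProjDimLE φ (n + 1) X) :
    RelProjDimLE φ n (.of A (relTensorCounit φ X).ker) := by
  obtain ⟨P, g, hP, -, hg, hs, hK⟩ := hX
  have : Module.Finite A (ModuleCat.of A (relTensorCounit φ X).ker) :=
    inferInstanceAs (Module.Finite A (relTensorCounit φ X).ker)
  exact hK.of_relStableSummand <| (RelStableSummand.refl φ X).ker
    (relProjective_iff_hasRelLifting.1 hP) (hasRelLifting_relTensor φ X) hg hs
    (relTensorCounit_surjective φ X) (relSplitB_relTensorCounit φ X)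

theorem RelProjDimLE.pdLE {f : ℕ}
    (hf : ∀ X : ModuleCat.{u} A, Module.Finite A X → (∃ k, PdLE A k X) → PdLE A f (relTensor φ X))
    [Module.Finite A X] (h : RelProjDimLE φ n X) (hX : ∃ k, PdLE A k X) : PdLE A (f + n) X := by
  induction n generalizing X with
  | zero =>
    obtain ⟨i, p, hpi⟩ := h
    exact (hf X ‹_› hX).of_retract i p hpi
  | succ n ih =>
    have hT : PdLE A f (relTensor φ X) := hf X ‹_› hX
    obtain ⟨k, hk⟩ := hX
    let ε := relTensorCounit φ X
    have hε : Function.Surjective ε := relTensorCounit_surjective φ X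
    have : Module.Finite A (ModuleCat.of A ε.ker) := inferInstanceAs (Module.Finite A ε.ker)
    have hK : PdLE A (f + k) ε.ker := .left_of_exact ε.ker.injective_subtype hε
      ε.exact_subtype_ker_map (hT.mono (by lia)) (hk.mono (by lia))
    exact .right_of_exact ε.ker.injective_subtype hε ε.exact_subtype_ker_map
      (ih h.ker_relTensorCounit ⟨_, hK⟩) (hT.mono (by lia))

end Noetherian

end Relative

theorem statement7_general {R : Type u} [CommRing R] [IsNoetherianRing R] {B A : Type u} [Ring B]
    [Ring A] [Algebra R B] [Algebra R A] [Module.Finite R B] [Module.Finite R A] (φ : B →ₐ[R] A)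
    (hfd : ∃ n : ℕ, ∀ X : ModuleCat.{u} A, Module.Finite A X →
      (∃ k : ℕ, ProjDimLE A k X) → RelProjDimLE φ n X)
    (hpdBA : ∃ k : ℕ, ProjDimLE B k (resMod φ (ModuleCat.of A A)))
    (hprojright : @Module.Projective Bᵐᵒᵖ _ A _ (rightModB φ))
    (hB : FinFinDim B) :
    FinFinDim A := by
  have : IsNoetherianRing B := IsNoetherianRing.of_finite R B
  have : IsNoetherianRing A := IsNoetherianRing.of_finite R A
  obtain ⟨n, hn⟩ := hfd
  obtain ⟨d, hd⟩ := hpdBA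
  obtain ⟨f, hf⟩ := hB
  obtain ⟨m, ⟨e⟩⟩ := exists_rightDualBasis hprojright
  have pdLE_relTensor (X : ModuleCat.{u} A) (hX : Module.Finite A X) (hk : ∃ k, PdLE A k X) :
      PdLE A f (relTensor φ X) := by
    obtain ⟨k, hk⟩ := hk
    have hres : PdLE B (d + k) (resMod φ X) := ProjDimLE.pdLE_resMod hd.pdLE hk.projDimLE
    exact e.pdLE_induced (hf (resMod φ X) inferInstance ⟨d + k, hres.projDimLE⟩)
  refine ⟨f + n, fun X hX ⟨k, hk⟩ => PdLE.projDimLE ?_⟩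
  exact (hn X hX ⟨k, hk⟩).pdLE pdLE_relTensor ⟨k, hk.pdLE⟩

/-- If `2 ≤ fd(φ) < ∞`, `A` has finite projective dimension as a left
`B`-module, `A` is projective as a right `B`-module, and `B` is representation-finite, then
the finitistic dimension of `A` is finite. -/
theorem statement7 (φ : B →ₐ[R] A)
    (hfd_lt_top : ∃ n : ℕ, ∀ X : ModuleCat.{u} A, Module.Finite A X →
      (∃ k : ℕ, ProjDimLE A k X) → RelProjDimLE φ n X)
    (hfd_ge_two : ∃ X : ModuleCat.{u} A, Module.Finite A X ∧
      (∃ k : ℕ, ProjDimLE A k X) ∧ ¬ RelProjDimLE φ 1 X)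
    (hpdBA : ∃ k : ℕ, ProjDimLE B k (resMod φ (ModuleCat.of A A)))
    (hprojright : @Module.Projective Bᵐᵒᵖ _ A _ (rightModB φ))
    (hB : RepFinite B) :
    FinFinDim A := by
  have : IsArtinianRing B := IsArtinianRing.of_finite R B
  exact statement7_general φ hfd_lt_top hpdBA hprojright hB.finFinDim
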